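/- Let A be a complex unital Banach algebra, a ∈ A with g-Drazin inverse a^d, a^π := 1 − a·a^d, and b, c ∈ A with (bc)·a^π = 0 and a^d·(bc) = (bc)·a^d. Then M = [[a,b],[c,0]] has g-Drazin inverse in M₂(A) if and only if bc has g-Drazin inverse in A. -/

import Mathlib

open Filter Finset

/-- An element of a complex (Banach) algebra is quasinilpotent if its spectral radius is zero. -/
noncomputable def Quasinilpotent {A : Type*} [Ring A] [Algebra ℂ A] (q : A) : Prop :=
  spectralRadius ℂ q = 0

/-- `a` has a generalized Drazin inverse: some `b` with `ab = ba`, `b = bab`,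
and `a - a²b` quasinilpotent. -/
noncomputable def HasGDrazin {A : Type*} [Ring A] [Algebra ℂ A] (a : A) : Prop :=
  ∃ b : A, a * b = b * a ∧ b = b * a * b ∧ Quasinilpotent (a - a ^ 2 * b)

/-!
By Cline's formula the anti-triangular matrix may be replaced by the companion matrix
`N = !![a, 1; w, 0]` with `w = b * c`. When `a` and `w` commute, `N * (N - a) = w` while `N - a` is
conjugate to `-N`, so everything reduces to two facts about commuting elements `x`, `y` of a Banach
algebra: if both have generalized Drazin inverses, so has `x * y`; if `x * y` and `x - y` have them,
so has `x`. The double commutant of `{x, y}` is a commutative Banach algebra in which no generalized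
Drazin inverse is lost, and there `x` has such an inverse iff some idempotent vanishes at exactly
the same characters as `x`. In the second fact this idempotent exists because `x / (x - y)` takes
only the values `0` and `1` at the characters killing `x * y` but not `x - y`, and idempotents lift
modulo quasinilpotents.
-/

section Algebra

variable {R S : Type*} [Ring R] [Algebra ℂ R] [Ring S] [Algebra ℂ S]

theorem quasinilpotent_iff_spectrum_subset {q : R} : Quasinilpotent q ↔ spectrum ℂ q ⊆ {0} := by
  simp [Quasinilpotent, spectralRadius, Set.subset_def]

theorem Quasinilpotent.map (φ : R →ₐ[ℂ] S) {q : R} (hq : Quasinilpotent q) :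
    Quasinilpotent (φ q) := by
  rw [quasinilpotent_iff_spectrum_subset] at hq ⊢
  exact (AlgHom.spectrum_apply_subset φ q).trans hq

theorem Quasinilpotent.of_map (φ : R →ₐ[ℂ] S) [IsLocalHom φ] {q : R}
    (hq : Quasinilpotent (φ q)) : Quasinilpotent q := by
  rw [quasinilpotent_iff_spectrum_subset] at hq ⊢
  refine fun z hz => hq fun hu => hz ?_
  rw [spectrum.mem_resolventSet_iff, ← AlgHom.commutes φ z, ← map_sub] at hu
  exact hu.of_map

theorem Quasinilpotent.neg {q : R} (hq : Quasinilpotent q) : Quasinilpotent (-q) := by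
  rw [quasinilpotent_iff_spectrum_subset] at hq ⊢
  rw [← spectrum.neg_eq, Set.neg_subset, Set.neg_singleton, neg_zero]
  exact hq

theorem Quasinilpotent.mul_swap {x y : R} (h : Quasinilpotent (x * y)) :
    Quasinilpotent (y * x) := by
  rw [quasinilpotent_iff_spectrum_subset, ← Set.sdiff_eq_empty] at h ⊢
  rwa [← spectrum.nonzero_mul_comm]

/-- `d` is a generalized Drazin inverse of `x`: the relation whose existential closure over `d`
is `HasGDrazin x`. -/
structure IsGDrazinInverse (x d : R) : Prop where
  commute : Commute x d
  mul_mul_self : d * x * d = d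
  quasinilpotent : Quasinilpotent (x - x ^ 2 * d)

theorem hasGDrazin_iff_exists_isGDrazinInverse {x : R} :
    HasGDrazin x ↔ ∃ d, IsGDrazinInverse x d :=
  ⟨fun ⟨d, hc, hd, hq⟩ => ⟨d, hc, hd.symm, hq⟩,
    fun ⟨d, h⟩ => ⟨d, h.commute.eq, h.mul_mul_self.symm, h.quasinilpotent⟩⟩

namespace IsGDrazinInverse

variable {x y d : R}

theorem isIdempotentElem_mul (h : IsGDrazinInverse x d) : IsIdempotentElem (x * d) := by
  rw [IsIdempotentElem, mul_assoc, ← mul_assoc d, h.mul_mul_self]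

theorem map (φ : R →ₐ[ℂ] S) (h : IsGDrazinInverse x d) : IsGDrazinInverse (φ x) (φ d) where
  commute := h.commute.map φ
  mul_mul_self := by rw [← map_mul, ← map_mul, h.mul_mul_self]
  quasinilpotent := by simpa only [map_sub, map_mul, map_pow] using h.quasinilpotent.map φ

theorem of_map (φ : R →ₐ[ℂ] S) [IsLocalHom φ] (hφ : Function.Injective φ)
    (h : IsGDrazinInverse (φ x) (φ d)) : IsGDrazinInverse x d where
  commute := h.commute.of_map hφ
  mul_mul_self := hφ (by simpa only [map_mul] using h.mul_mul_self)
  quasinilpotent := .of_map φ (by simpa only [map_sub, map_mul, map_pow] using h.quasinilpotent)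

theorem neg (h : IsGDrazinInverse x d) : IsGDrazinInverse (-x) (-d) where
  commute := h.commute.neg_left.neg_right
  mul_mul_self := by rw [neg_mul_neg, mul_neg, h.mul_mul_self]
  quasinilpotent := by
    convert h.quasinilpotent.neg using 1
    noncomm_ring

/-- **Cline's formula**. -/
theorem mul_swap (h : IsGDrazinInverse (x * y) d) :
    IsGDrazinInverse (y * x) (y * d * d * x) := by
  have hxyd : x * y * d * d = d := by rw [h.commute.eq, h.mul_mul_self]
  have hdxy : d * d * (x * y) = d := by rw [mul_assoc, ← h.commute.eq, ← mul_assoc, h.mul_mul_self]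
  have hleft : y * x * (y * d * d * x) = y * d * x := by
    calc y * x * (y * d * d * x) = y * (x * y * d * d) * x := by noncomm_ring
      _ = y * d * x := by rw [hxyd]
  have hright : y * d * d * x * (y * x) = y * d * x := by
    calc y * d * d * x * (y * x) = y * (d * d * (x * y)) * x := by noncomm_ring
      _ = y * d * x := by rw [hdxy]
  refine ⟨hleft.trans hright.symm, ?_, ?_⟩
  · calc y * d * d * x * (y * x) * (y * d * d * x) = y * d * (x * y * d * d) * x := by
          rw [hright]; noncomm_ring
      _ = y * d * d * x := by rw [hxyd]
  · have hfactor : y * x - (y * x) ^ 2 * (y * d * d * x) = y * (x * (1 - y * d * x)) := by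
      rw [sq, mul_assoc (y * x), hleft]
      noncomm_ring
    rw [hfactor]
    apply Quasinilpotent.mul_swap
    convert h.quasinilpotent using 1
    calc x * (1 - y * d * x) * y = x * y - x * y * (d * (x * y)) := by noncomm_ring
      _ = x * y - (x * y) ^ 2 * d := by rw [← h.commute.eq, sq, ← mul_assoc]

end IsGDrazinInverse

namespace HasGDrazin

variable {x y : R}

theorem map (φ : R →ₐ[ℂ] S) (hx : HasGDrazin x) : HasGDrazin (φ x) := by
  obtain ⟨d, hd⟩ := hasGDrazin_iff_exists_isGDrazinInverse.1 hx
  exact hasGDrazin_iff_exists_isGDrazinInverse.2 ⟨φ d, hd.map φ⟩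

theorem neg (hx : HasGDrazin x) : HasGDrazin (-x) := by
  obtain ⟨d, hd⟩ := hasGDrazin_iff_exists_isGDrazinInverse.1 hx
  exact hasGDrazin_iff_exists_isGDrazinInverse.2 ⟨-d, hd.neg⟩

theorem mul_swap (h : HasGDrazin (x * y)) : HasGDrazin (y * x) := by
  obtain ⟨d, hd⟩ := hasGDrazin_iff_exists_isGDrazinInverse.1 h
  exact hasGDrazin_iff_exists_isGDrazinInverse.2 ⟨y * d * d * x, hd.mul_swap⟩

end HasGDrazin

theorem hasGDrazin_neg_iff {x : R} : HasGDrazin (-x) ↔ HasGDrazin x :=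
  ⟨fun h => neg_neg x ▸ h.neg, HasGDrazin.neg⟩

theorem hasGDrazin_mul_comm (x y : R) : HasGDrazin (x * y) ↔ HasGDrazin (y * x) :=
  ⟨HasGDrazin.mul_swap, HasGDrazin.mul_swap⟩

theorem isLocalHom_of_range_eq_centralizer (φ : R →ₐ[ℂ] S) (hφ : Function.Injective φ) {T : Set S}
    (hT : Set.range φ = T.centralizer) : IsLocalHom φ where
  map_nonunit x := by
    rintro ⟨u, hu⟩
    obtain ⟨v, hv⟩ : (↑u⁻¹ : S) ∈ Set.range φ := by
      rw [hT]
      intro t ht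
      have hcomm : Commute t (u : S) := by
        rw [hu]
        exact (hT ▸ Set.mem_range_self x : φ x ∈ T.centralizer) t ht
      exact hcomm.units_inv_right
    refine isUnit_iff_exists.2 ⟨v, hφ ?_, hφ ?_⟩
    · rw [map_mul, map_one, hv, ← hu, Units.mul_inv]
    · rw [map_mul, map_one, hv, ← hu, Units.inv_mul]

end Algebra

theorem eq_pow_mul_mul_pow {M : Type*} [Monoid M] {d q x : M} (h : x = d * x * q) (n : ℕ) :
    x = d ^ n * x * q ^ n := by
  induction n with
  | zero => simp
  | succ n ih => rw [pow_succ, pow_succ', mul_assoc, mul_assoc, ← mul_assoc x, ← mul_assoc d,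
      ← mul_assoc d, ← h, ← mul_assoc, ← ih]

theorem commute_of_mul_one_sub_mul_eq_zero {R : Type*} [Ring R] {a d w : R} (had : Commute a d)
    (hd : d * a * d = d) (hw : w * (1 - a * d) = 0) (hdw : Commute d w) : Commute a w := by
  have hwad : w = w * a * d := by
    rwa [mul_sub, mul_one, sub_eq_zero, ← mul_assoc] at hw
  have hdwa : w = d * w * a := by
    rw [hdw.eq, mul_assoc, ← had.eq, ← mul_assoc, ← hwad]
  calc a * w = a * (d * w * a) := by rw [← hdwa]
    _ = a * d * w * a := by noncomm_ring
    _ = a * d * (d * w * a) * a := by rw [← hdwa]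
    _ = d * a * d * w * a * a := by rw [had.eq]; noncomm_ring
    _ = w * a := by rw [hd, ← hdwa]

theorem catalan_le_four_pow (n : ℕ) : catalan n ≤ 4 ^ n := by
  rw [catalan_eq_centralBinom_div]
  exact (Nat.div_le_self _ _).trans (Nat.centralBinom_le_four_pow n)

section Companion

variable {R : Type*} [Ring R]

theorem companion_mul_companion_sub_scalar (a w : R) :
    !![a, 1; w, 0] * (!![a, 1; w, 0] - Matrix.scalar (Fin 2) a) = Matrix.scalar (Fin 2) w := by
  ext i j
  fin_cases i <;> fin_cases j <;> simp [Matrix.mul_apply]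

theorem commute_companion_scalar {a w : R} (h : Commute a w) :
    Commute !![a, 1; w, 0] (Matrix.scalar (Fin 2) a) := by
  ext i j
  fin_cases i <;> fin_cases j <;> simp [Matrix.mul_apply, h.eq]

variable [Algebra ℂ R]

theorem hasGDrazin_companion_sub_scalar_iff (a w : R) :
    HasGDrazin (!![a, 1; w, 0] - Matrix.scalar (Fin 2) a) ↔ HasGDrazin !![a, 1; w, 0] := by
  let U : Matrix (Fin 2) (Fin 2) R := !![-1, 0; a, 1]
  have hU : U * U = 1 := by
    ext i j
    fin_cases i <;> fin_cases j <;> simp [U, Matrix.mul_apply]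
  have hconj : !![a, 1; w, 0] - Matrix.scalar (Fin 2) a = -(U * (!![a, 1; w, 0] * U)) := by
    ext i j
    fin_cases i <;> fin_cases j <;> simp [U]
  rw [hconj, hasGDrazin_neg_iff, hasGDrazin_mul_comm, mul_assoc, hU, mul_one]

theorem hasGDrazin_antitriangular_iff_companion (a b c : R) :
    HasGDrazin !![a, b; c, 0] ↔ HasGDrazin !![a, 1; b * c, 0] := by
  have hfactor : !![a, b; c, 0] = !![a, 1; c, 0] * !![1, 0; 0, b] := by simp
  have hswap : !![a, 1; b * c, 0] = !![1, 0; 0, b] * !![a, 1; c, 0] := by simp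
  rw [hfactor, hswap, hasGDrazin_mul_comm]

end Companion

section Banach

universe u

variable {B : Type u} [NormedRing B] [NormedAlgebra ℂ B] [CompleteSpace B]

theorem Quasinilpotent.summable_pow_mul_norm_pow {q : B} (hq : Quasinilpotent q) {K : ℝ}
    (hK : 0 ≤ K) : Summable fun n : ℕ => K ^ n * ‖q ^ n‖ := by
  let ρ : ℝ := (2 * (K + 1))⁻¹
  have hρ : 0 < ρ := by positivity
  have hKρ : K * ρ ≤ 1 / 2 := by
    rw [← div_eq_mul_inv, div_le_div_iff₀ (by positivity) two_pos]
    linarith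
  have hlim := spectrum.pow_norm_pow_one_div_tendsto_nhds_spectralRadius q
  rw [show spectralRadius ℂ q = 0 from hq] at hlim
  refine .of_norm_bounded_eventually_nat summable_geometric_two ?_
  filter_upwards [hlim.eventually_lt_const (ENNReal.ofReal_pos.2 hρ), eventually_gt_atTop 0]
    with n hn hn0
  have hroot : ‖q ^ n‖ ^ (1 / n : ℝ) ≤ ρ := ((ENNReal.ofReal_lt_ofReal_iff hρ).1 hn).le
  have hpow : ‖q ^ n‖ ≤ ρ ^ n := by
    rwa [one_div, Real.rpow_inv_le_iff_of_pos (norm_nonneg _) hρ.le (Nat.cast_pos.2 hn0),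
      Real.rpow_natCast] at hroot
  calc ‖K ^ n * ‖q ^ n‖‖ = K ^ n * ‖q ^ n‖ := Real.norm_of_nonneg (by positivity)
    _ ≤ K ^ n * ρ ^ n := by gcongr
    _ = (K * ρ) ^ n := (mul_pow ..).symm
    _ ≤ (1 / 2) ^ n := by gcongr

theorem Quasinilpotent.eq_zero_of_forall_norm_le {q x : B} (hq : Quasinilpotent q) {K : ℝ}
    (hK : 0 ≤ K) (h : ∀ n ≠ 0, ‖x‖ ≤ K ^ n * ‖q ^ n‖ * ‖x‖) : x = 0 := by
  have hlim := (hq.summable_pow_mul_norm_pow hK).tendsto_atTop_zero.mul_const ‖x‖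
  rw [zero_mul] at hlim
  exact norm_le_zero_iff.1 (ge_of_tendsto hlim ((eventually_ne_atTop 0).mono h))

theorem Quasinilpotent.eq_zero_of_eq_mul_mul_self {q d x : B} (hq : Quasinilpotent q)
    (h : x = d * x * q) : x = 0 := by
  refine hq.eq_zero_of_forall_norm_le (norm_nonneg d) fun n hn => ?_
  calc ‖x‖ = ‖d ^ n * x * q ^ n‖ := by rw [← eq_pow_mul_mul_pow h n]
    _ ≤ ‖d‖ ^ n * ‖x‖ * ‖q ^ n‖ := by
      grw [norm_mul_le, norm_mul_le, norm_pow_le' d (Nat.pos_of_ne_zero hn)]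
    _ = ‖d‖ ^ n * ‖q ^ n‖ * ‖x‖ := by ring

theorem Quasinilpotent.eq_zero_of_eq_self_mul_mul {q d x : B} (hq : Quasinilpotent q)
    (h : x = q * x * d) : x = 0 := by
  refine hq.eq_zero_of_forall_norm_le (norm_nonneg d) fun n hn => ?_
  calc ‖x‖ = ‖q ^ n * x * d ^ n‖ := by rw [← eq_pow_mul_mul_pow h n]
    _ ≤ ‖q ^ n‖ * ‖x‖ * ‖d‖ ^ n := by
      grw [norm_mul_le, norm_mul_le, norm_pow_le' d (Nat.pos_of_ne_zero hn)]
    _ = ‖d‖ ^ n * ‖q ^ n‖ * ‖x‖ := by ring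

theorem IsGDrazinInverse.commute_mul_of_commute {x d s : B} (h : IsGDrazinInverse x d)
    (hs : Commute s x) : Commute s (x * d) := by
  obtain ⟨p, hp⟩ : ∃ p, p = x * d := ⟨_, rfl⟩
  obtain ⟨q, hq⟩ : ∃ q, q = x - x ^ 2 * d := ⟨_, rfl⟩
  have hpp : IsIdempotentElem p := hp ▸ h.isIdempotentElem_mul
  have hxp : Commute x p := hp ▸ (Commute.refl x).mul_right h.commute
  have hdp : Commute d p := hp ▸ h.commute.symm.mul_right (Commute.refl d)
  have hxq : x * (1 - p) = q := by rw [hq, hp]; noncomm_ring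
  have hqx : (1 - p) * x = q := by rw [← hxq, ((Commute.one_right x).sub_right hxp).eq]
  have hpq : (1 - p) * q = q := by rw [← hqx, ← mul_assoc, hpp.one_sub.eq]
  have hqp : q * (1 - p) = q := by rw [← hxq, mul_assoc, hpp.one_sub.eq]
  have hqn : Quasinilpotent q := hq ▸ h.quasinilpotent
  have hleft : p * s * (1 - p) = 0 := by
    refine hqn.eq_zero_of_eq_mul_mul_self (d := d) ?_
    calc p * s * (1 - p) = p * (d * x) * s * (1 - p) := by rw [← h.commute.eq, ← hp, hpp.eq]
      _ = p * d * (x * s) * (1 - p) := by simp only [mul_assoc]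
      _ = d * p * (s * x) * (1 - p) := by rw [hdp.eq, hs.eq]
      _ = d * p * s * (x * (1 - p)) := by simp only [mul_assoc]
      _ = d * p * s * ((1 - p) * q) := by rw [hxq, hpq]
      _ = d * (p * s * (1 - p)) * q := by simp only [mul_assoc]
  have hright : (1 - p) * s * p = 0 := by
    refine hqn.eq_zero_of_eq_self_mul_mul (d := d) ?_
    calc (1 - p) * s * p = (1 - p) * s * (x * d * p) := by rw [← hp, hpp.eq]
      _ = (1 - p) * (s * x) * (d * p) := by simp only [mul_assoc]
      _ = (1 - p) * (x * s) * (p * d) := by rw [hdp.eq, hs.eq]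
      _ = (1 - p) * x * s * p * d := by simp only [mul_assoc]
      _ = q * (1 - p) * s * p * d := by rw [hqx, hqp]
      _ = q * ((1 - p) * s * p) * d := by simp only [mul_assoc]
  rw [mul_sub, mul_one, sub_eq_zero] at hleft
  rw [sub_mul, one_mul, sub_mul, sub_eq_zero] at hright
  rw [← hp]
  exact hright.trans hleft.symm

theorem IsGDrazinInverse.commute_of_commute {x d s : B} (h : IsGDrazinInverse x d)
    (hs : Commute s x) : Commute s d := by
  have hsxd : s * (x * d) = x * d * s := (h.commute_mul_of_commute hs).eq
  calc s * d = s * (d * x * d) := by rw [h.mul_mul_self]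
    _ = s * (x * d) * d := by rw [← h.commute.eq, ← mul_assoc]
    _ = d * (x * s) * d := by rw [hsxd, h.commute.eq, ← mul_assoc d]
    _ = d * (s * (x * d)) := by rw [← hs.eq]; simp only [mul_assoc]
    _ = d * s := by rw [hsxd, ← mul_assoc, ← mul_assoc, h.mul_mul_self]

theorem hasGDrazin_map_iff_of_range_eq_centralizer {R : Type*} [Ring R] [Algebra ℂ R]
    (φ : R →ₐ[ℂ] B) (hφ : Function.Injective φ) {T : Set B} (hT : Set.range φ = T.centralizer)
    {x : R} : HasGDrazin (φ x) ↔ HasGDrazin x := by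
  refine ⟨fun h => ?_, HasGDrazin.map φ⟩
  rw [hasGDrazin_iff_exists_isGDrazinInverse] at h ⊢
  obtain ⟨d, hd⟩ := h
  have hx : φ x ∈ T.centralizer := hT ▸ Set.mem_range_self x
  obtain ⟨d, rfl⟩ : d ∈ Set.range φ := by
    rw [hT]
    exact fun t ht => hd.commute_of_commute (hx t ht)
  have := isLocalHom_of_range_eq_centralizer φ hφ hT
  exact ⟨d, hd.of_map φ hφ⟩

theorem exists_normedCommRing_hasGDrazin_map_iff {S : Set B}
    (hS : S.Pairwise Commute) :
    ∃ (C : Type u) (_ : NormedCommRing C) (_ : NormedAlgebra ℂ C) (_ : CompleteSpace C)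
      (φ : C →ₐ[ℂ] B), S ⊆ Set.range φ ∧ ∀ z, HasGDrazin (φ z) ↔ HasGDrazin z := by
  let C : Subalgebra ℂ B := Subalgebra.centralizer ℂ S.centralizer
  have hcommS : ∀ x ∈ S, ∀ y ∈ S, x * y = y * x := fun _ hx _ hy =>
    Set.pairwise_iff_of_refl.1 hS hx hy
  have hcomm (s t : C) : s * t = t * s :=
    Subtype.ext (Set.centralizer_centralizer_comm_of_comm hcommS s s.2 t t.2)
  have hrange : Set.range C.val = S.centralizer.centralizer := Subtype.range_coe
  refine ⟨C, { (inferInstance : NormedRing C) with mul_comm := hcomm }, inferInstance,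
    (Set.isClosed_centralizer S.centralizer).completeSpace_coe, C.val, ?_, fun z => ?_⟩
  · rw [hrange]
    exact Set.subset_centralizer_centralizer
  · exact hasGDrazin_map_iff_of_range_eq_centralizer C.val Subtype.val_injective hrange

theorem Quasinilpotent.exists_eq_one_add_mul_sq {z : B} (hz : Quasinilpotent z) :
    ∃ s : B, s = 1 + z * s ^ 2 := by
  -- The solution is the generating function of the Catalan numbers, evaluated at `z`.
  have hsum : Summable fun n : ℕ => ‖catalan n • z ^ n‖ := by
    refine .of_nonneg_of_le (fun n => norm_nonneg _) (fun n => ?_)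
      (hz.summable_pow_mul_norm_pow (K := 4) (by norm_num))
    calc ‖catalan n • z ^ n‖ ≤ catalan n * ‖z ^ n‖ := norm_nsmul_le
      _ ≤ 4 ^ n * ‖z ^ n‖ := by
        gcongr
        exact_mod_cast catalan_le_four_pow n
  refine ⟨∑' n : ℕ, catalan n • z ^ n, ?_⟩
  rw [sq, tsum_mul_tsum_eq_tsum_sum_antidiagonal_of_summable_norm hsum hsum,
    ← (summable_norm_sum_mul_antidiagonal_of_summable_norm hsum hsum).of_norm.tsum_mul_left z,
    hsum.of_norm.tsum_eq_zero_add]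
  congr 1
  · simp
  · refine tsum_congr fun n => ?_
    rw [catalan_succ', sum_smul, mul_sum]
    refine sum_congr rfl fun p hp => ?_
    rw [smul_mul_smul_comm, ← pow_add, mem_antidiagonal.1 hp, mul_smul_comm, ← pow_succ']

end Banach

section Commutative

open WeakDual

variable {C : Type*} [NormedCommRing C] [NormedAlgebra ℂ C] [CompleteSpace C]

theorem isUnit_iff_forall_character_ne_zero {x : C} :
    IsUnit x ↔ ∀ χ : characterSpace ℂ C, χ x ≠ 0 := by
  refine ⟨fun h χ => (h.map χ).ne_zero, fun h => ?_⟩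
  by_contra hx
  obtain ⟨χ, hχ⟩ := CharacterSpace.exists_apply_eq_zero hx
  exact h χ hχ

theorem quasinilpotent_iff_forall_character_eq_zero {q : C} :
    Quasinilpotent q ↔ ∀ χ : characterSpace ℂ C, χ q = 0 := by
  simp only [quasinilpotent_iff_spectrum_subset, Set.subset_def,
    CharacterSpace.mem_spectrum_iff_exists, forall_exists_index,
    forall_apply_eq_imp_iff, Set.mem_singleton_iff]

theorem Quasinilpotent.exists_isIdempotentElem_sub {t : C} (ht : Quasinilpotent (t ^ 2 - t)) :
    ∃ p : C, IsIdempotentElem p ∧ Quasinilpotent (p - t) := by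
  rw [quasinilpotent_iff_forall_character_eq_zero] at ht
  have hunit : IsUnit (1 + 4 * (t ^ 2 - t)) := by
    rw [isUnit_iff_forall_character_ne_zero]
    intro χ
    rw [map_add, map_mul, ht χ, mul_zero, add_zero, map_one]
    exact one_ne_zero
  obtain ⟨u, hu⟩ := hunit.exists_right_inv
  have hz : Quasinilpotent ((t ^ 2 - t) * u) :=
    quasinilpotent_iff_forall_character_eq_zero.2 fun χ => by rw [map_mul, ht χ, zero_mul]
  obtain ⟨s, hs⟩ := hz.exists_eq_one_add_mul_sq
  -- `r` is the small root of `r - r ^ 2 = (t ^ 2 - t) / (1 - 2 * t) ^ 2`, which is what makes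
  -- `t + r * (1 - 2 * t)` idempotent.
  obtain ⟨r, hr⟩ : ∃ r, r = (t ^ 2 - t) * u * s := ⟨_, rfl⟩
  have hroot : (r - r ^ 2) * (1 - 2 * t) ^ 2 = t ^ 2 - t := by
    have hrr : r - r ^ 2 = (t ^ 2 - t) * u := by
      rw [hr]
      linear_combination (t ^ 2 - t) * u * hs
    linear_combination (1 - 2 * t) ^ 2 * hrr + (t ^ 2 - t) * hu
  refine ⟨t + r * (1 - 2 * t), ?_, quasinilpotent_iff_forall_character_eq_zero.2 fun χ => ?_⟩
  · rw [IsIdempotentElem]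
    linear_combination -hroot
  · rw [add_sub_cancel_left, hr]
    simp only [map_mul, ht χ, zero_mul]

theorem IsGDrazinInverse.apply_mul_eq_zero_iff {x d : C} (h : IsGDrazinInverse x d)
    (χ : characterSpace ℂ C) : χ (x * d) = 0 ↔ χ x = 0 := by
  refine ⟨fun hχ => ?_, fun hχ => by rw [map_mul, hχ, zero_mul]⟩
  have hq := quasinilpotent_iff_forall_character_eq_zero.1 h.quasinilpotent χ
  rwa [sq, mul_assoc, map_sub, map_mul χ x (x * d), hχ, mul_zero, sub_zero] at hq

theorem hasGDrazin_iff_exists_isIdempotentElem {x : C} :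
    HasGDrazin x ↔ ∃ p : C, IsIdempotentElem p ∧
      ∀ χ : characterSpace ℂ C, χ p = 0 ↔ χ x = 0 := by
  rw [hasGDrazin_iff_exists_isGDrazinInverse]
  constructor
  · rintro ⟨d, hd⟩
    exact ⟨x * d, hd.isIdempotentElem_mul, hd.apply_mul_eq_zero_iff⟩
  · rintro ⟨p, hp, hpx⟩
    have hvalue (χ : characterSpace ℂ C) : χ p = 0 ∨ χ p = 1 :=
      IsIdempotentElem.iff_eq_zero_or_one.1 (hp.map χ)
    have hunit : IsUnit (x + (1 - p)) := by
      rw [isUnit_iff_forall_character_ne_zero]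
      intro χ
      rcases hvalue χ with h | h
      · simp [(hpx χ).1 h, h]
      · have hx : χ x ≠ 0 := by simp [← hpx χ, h]
        simpa [h] using hx
    obtain ⟨u, hu⟩ := hunit.exists_right_inv
    have hxpu : x * (p * u) = p := by linear_combination p * hu + u * hp.eq
    refine ⟨p * u, mul_comm _ _, ?_, ?_⟩
    · linear_combination p * u * hxpu + u * hp.eq
    · rw [quasinilpotent_iff_forall_character_eq_zero]
      intro χ
      rw [sq, mul_assoc, hxpu]
      rcases hvalue χ with h | h
      · simp [(hpx χ).1 h]
      · simp [h]

theorem HasGDrazin.mul {x y : C} (hx : HasGDrazin x) (hy : HasGDrazin y) :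
    HasGDrazin (x * y) := by
  rw [hasGDrazin_iff_exists_isIdempotentElem] at hx hy ⊢
  obtain ⟨p, hp, hpx⟩ := hx
  obtain ⟨r, hr, hry⟩ := hy
  exact ⟨p * r, hp.mul hr, fun χ => by simp only [map_mul, mul_eq_zero, hpx χ, hry χ]⟩

theorem HasGDrazin.of_mul_of_sub {x y : C} (hmul : HasGDrazin (x * y))
    (hsub : HasGDrazin (x - y)) : HasGDrazin x := by
  obtain ⟨p, hp, hpxy⟩ := hasGDrazin_iff_exists_isIdempotentElem.1 hmul
  obtain ⟨v, hv⟩ := hasGDrazin_iff_exists_isGDrazinInverse.1 hsub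
  have hpvalue (χ : characterSpace ℂ C) : χ p = 0 ∨ χ p = 1 :=
    IsIdempotentElem.iff_eq_zero_or_one.1 (hp.map χ)
  have hxy (χ : characterSpace ℂ C) (h : χ p = 0) : χ x = 0 ∨ χ y = 0 := by
    rwa [hpxy, map_mul, mul_eq_zero] at h
  have hv0 (χ : characterSpace ℂ C) (h : χ v = 0) : χ x = χ y := by
    rw [← sub_eq_zero, ← map_sub, ← hv.apply_mul_eq_zero_iff, map_mul, h, mul_zero]
  have hlift : Quasinilpotent (((1 - p) * x * v) ^ 2 - (1 - p) * x * v) := by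
    refine quasinilpotent_iff_forall_character_eq_zero.2 fun χ => ?_
    rcases hpvalue χ with h | h
    · rcases hxy χ h with hx | hy
      · simp [hx]
      · have hsv := (hv.isIdempotentElem_mul.map χ).eq
        simp only [map_mul, map_sub, hy, sub_zero] at hsv
        simp only [map_sub, map_pow, map_mul, map_one, h]
        linear_combination hsv
    · simp [h]
  obtain ⟨r, hr, hrt⟩ := hlift.exists_isIdempotentElem_sub
  refine hasGDrazin_iff_exists_isIdempotentElem.2
    ⟨p + r - p * r, hp.add_sub_mul hr, fun χ => ?_⟩
  have hrχ : χ r = (1 - χ p) * χ x * χ v := by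
    simpa [sub_eq_zero] using quasinilpotent_iff_forall_character_eq_zero.1 hrt χ
  rcases hpvalue χ with h | h
  · have hxv : χ x * χ v = 0 ↔ χ x = 0 := by
      refine ⟨fun hxv => (mul_eq_zero.1 hxv).elim id fun hv' => ?_, fun hx => by rw [hx, zero_mul]⟩
      rcases hxy χ h with hx | hy
      · exact hx
      · rw [hv0 χ hv', hy]
    simpa [h, hrχ] using hxv
  · have hx : χ x ≠ 0 := fun hx => by simp [(hpxy χ).2 (by rw [map_mul, hx, zero_mul])] at h
    simpa [h] using hx

end Commutative

section Commuting

variable {B : Type*} [NormedRing B] [NormedAlgebra ℂ B] [CompleteSpace B] {x y : B}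

theorem HasGDrazin.mul_of_commute (hx : HasGDrazin x) (h : Commute x y) (hy : HasGDrazin y) :
    HasGDrazin (x * y) := by
  obtain ⟨C, _, _, _, φ, hφ, hiff⟩ :=
    exists_normedCommRing_hasGDrazin_map_iff (Set.pairwise_pair_of_symm.2 fun _ => h)
  obtain ⟨x, rfl⟩ := hφ (Set.mem_insert x {y})
  obtain ⟨y, rfl⟩ := hφ (Set.mem_insert_of_mem _ rfl)
  rw [← map_mul, hiff]
  exact ((hiff x).1 hx).mul ((hiff y).1 hy)

theorem HasGDrazin.of_mul_of_sub_of_commute (hmul : HasGDrazin (x * y)) (h : Commute x y)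
    (hsub : HasGDrazin (x - y)) : HasGDrazin x := by
  obtain ⟨C, _, _, _, φ, hφ, hiff⟩ :=
    exists_normedCommRing_hasGDrazin_map_iff (Set.pairwise_pair_of_symm.2 fun _ => h)
  obtain ⟨x, rfl⟩ := hφ (Set.mem_insert x {y})
  obtain ⟨y, rfl⟩ := hφ (Set.mem_insert_of_mem _ rfl)
  rw [← map_mul, hiff] at hmul
  rw [← map_sub, hiff] at hsub
  exact (hiff x).2 (hmul.of_mul_of_sub hsub)

end Commuting

section Matrix

variable {A : Type*} [NormedRing A] [NormedAlgebra ℂ A] [CompleteSpace A]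

open scoped Matrix.Norms.Operator

variable {n : Type*} [Fintype n] [DecidableEq n]

-- Instance search does not unfold the uniformity of the operator norm to the product uniformity.
local instance completeSpace_matrix_operatorNorm :
    @CompleteSpace (Matrix n n A) PseudoMetricSpace.toUniformSpace :=
  inferInstanceAs (CompleteSpace (n → n → A))

theorem hasGDrazin_scalar_iff [Nonempty n] {x : A} :
    HasGDrazin (Matrix.scalar n x) ↔ HasGDrazin x := by
  let φ : A →ₐ[ℂ] Matrix n n A := Matrix.scalarAlgHom n ℂ
  let T : Set (Matrix n n A) := Set.range fun e : n × n => Matrix.single e.1 e.2 1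
  have hrange : Set.range φ = T.centralizer := by
    ext M
    rw [Set.mem_centralizer_iff, Set.forall_mem_range, Prod.forall]
    exact Matrix.mem_range_scalar_iff_commute_single'
  exact hasGDrazin_map_iff_of_range_eq_centralizer φ (fun _ _ => Matrix.scalar_inj.1) hrange

theorem hasGDrazin_companion_iff {a w : A} (ha : HasGDrazin a) (h : Commute a w) :
    HasGDrazin !![a, 1; w, 0] ↔ HasGDrazin w := by
  rw [← hasGDrazin_scalar_iff (n := Fin 2)] at ha
  rw [← hasGDrazin_scalar_iff (n := Fin 2) (x := w), ← companion_mul_companion_sub_scalar a w]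
  have hcomm := (Commute.refl _).sub_right (commute_companion_scalar h)
  refine ⟨fun hN => hN.mul_of_commute hcomm ((hasGDrazin_companion_sub_scalar_iff a w).2 hN),
    fun hw => hw.of_mul_of_sub_of_commute hcomm ?_⟩
  rwa [sub_sub_cancel]

theorem stmt16_general {a b c : A} (ha : HasGDrazin a) (h : Commute a (b * c)) :
    HasGDrazin (!![a, b; c, 0] : Matrix (Fin 2) (Fin 2) A) ↔ HasGDrazin (b * c) := by
  rw [hasGDrazin_antitriangular_iff_companion, hasGDrazin_companion_iff ha h]

end Matrix

theorem stmt16 {A : Type*} [NormedRing A] [NormedAlgebra ℂ A] [CompleteSpace A]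
    (a b c ad : A) (h1 : a * ad = ad * a) (h2 : ad = ad * a * ad)
    (h3 : Quasinilpotent (a - a ^ 2 * ad))
    (hbc : (b * c) * (1 - a * ad) = 0) (hcm : ad * (b * c) = (b * c) * ad) :
    HasGDrazin (!![a, b; c, 0] : Matrix (Fin 2) (Fin 2) A) ↔ HasGDrazin (b * c) :=
  stmt16_general ⟨ad, h1, h2, h3⟩ (commute_of_mul_one_sub_mul_eq_zero h1 h2.symm hbc hcm)
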